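/- (Theorem 3.) Fix γ > 0, d_M > 0, d_K > 0 and set C = log₂(1+γ), V = 1 − (1+γ)^{−2}, ε(n, d) = Q((ln 2)·√(n/V)·(C − d/n)). Let S ≥ 3 be an integer, let D_loss > 0, D_conf > 0 and 0 < α ≤ 1, and define the Exclusion-strategy distortion D̆(n_M, n_K) = ε(n_M, d_M)·D_loss + (1 − ε(n_M, d_M))·( ε(n_K, d_K)·α·((S−2)/(S−1))·D_conf + (1 − α)·D_conf ). Let 0 < a_M ≤ b_M and 0 < a_K ≤ b_K be blocklength bounds and write ε_K^max = ε(a_K, d_K). If D_conf > D_loss and α < (D_conf − D_loss)/(D_conf·(1 − ε_K^max·(S−2)/(S−1))), then for all (n_M, n_K) ∈ [a_M, b_M] × [a_K, b_K] one has D̆(n_M, n_K) ≤ D̆(b_M, a_K), i.e. the maximum is attained at (n_M^max, n_K^min); whereas if α ≥ (D_conf − D_loss)/(D_conf·(1 − ε_K^max·(S−2)/(S−1))), then for all (n_M, n_K) in the box one has D̆(n_M, n_K) ≤ D̆(a_M, a_K), i.e. the maximum is attained at (n_M^min, n_K^min). -/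

import Mathlib

/-- The Gaussian Q-function `Q(x) = (1/√(2π)) ∫_x^∞ e^{−t²/2} dt`. -/
noncomputable def gaussQ (x : ℝ) : ℝ :=
  (Real.sqrt (2 * Real.pi))⁻¹ * ∫ t in Set.Ioi x, Real.exp (-t ^ 2 / 2)

/-- Finite-blocklength error probability for SNR `γ`, payload `d`, blocklength `n`,
with capacity `C = log₂(1+γ)` and dispersion `V = 1 − (1+γ)^{−2}`. -/
noncomputable def epsFBL (γ d n : ℝ) : ℝ :=
  gaussQ (Real.log 2 * Real.sqrt (n / (1 - ((1 + γ) ^ 2)⁻¹)) *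
    (Real.logb 2 (1 + γ) - d / n))

/-- The eavesdropper's expected semantic distortion under the Exclusion strategy,
`D̆(n_M, n_K) = ε(n_M,d_M)·D_loss +
  (1 − ε(n_M,d_M))·(ε(n_K,d_K)·α·((S−2)/(S−1))·D_conf + (1 − α)·D_conf)`. -/
noncomputable def exclusionDistortion
    (γ dM dK Dloss Dconf α : ℝ) (S : ℤ) (nM nK : ℝ) : ℝ :=
  epsFBL γ dM nM * Dloss +
    (1 - epsFBL γ dM nM) *
      (epsFBL γ dK nK * α * (((S : ℝ) - 2) / ((S : ℝ) - 1)) * Dconf +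
        (1 - α) * Dconf)

/-!
The distortion is a convex combination of `D_loss` and the expected distortion `κ(n_K)` of a
message whose ciphertext has been decoded, with weights `ε(n_M, d_M)` and `1 − ε(n_M, d_M)`.
Since `ε` decreases with the blocklength, so does `κ`, and a shorter key always increases the
distortion. A longer message shifts weight from `D_loss` to `κ(n_K)`, so it increases the distortion
exactly when `D_loss ≤ κ(n_K)`; solved for `α`, this is the threshold of the theorem.
-/

section

open Set MeasureTheory ProbabilityTheory

theorem gaussQ_eq_gaussianReal_real_Ioi (x : ℝ) : gaussQ x = (gaussianReal 0 1).real (Ioi x) := by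
  have density_nonneg : 0 ≤ ∫ t in Ioi x, gaussianPDFReal 0 1 t :=
    integral_nonneg fun t => gaussianPDFReal_nonneg 0 1 t
  rw [measureReal_def, gaussianReal_apply_eq_integral 0 one_ne_zero,
    ENNReal.toReal_ofReal density_nonneg]
  simp only [gaussQ, gaussianPDFReal, integral_const_mul, NNReal.coe_one, mul_one, sub_zero]

theorem gaussQ_le_one (x : ℝ) : gaussQ x ≤ 1 := by
  rw [gaussQ_eq_gaussianReal_real_Ioi]
  exact measureReal_le_one

theorem antitone_gaussQ : Antitone gaussQ := fun x y hxy => by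
  simpa only [gaussQ_eq_gaussianReal_real_Ioi] using measureReal_mono (Ioi_subset_Ioi hxy)

theorem monotoneOn_sqrt_mul_sub_div {c d : ℝ} (hc : 0 ≤ c) (hd : 0 ≤ d) :
    MonotoneOn (fun n : ℝ => √n * (c - d / n)) (Ioi 0) := by
  have expand (n : ℝ) : √n * (c - d / n) = c * √n - d / √n := by
    rw [mul_sub, mul_comm, mul_div_left_comm, Real.sqrt_div_self', mul_one_div]
  intro m hm n _ hmn
  have sqrt_pos : 0 < √m := Real.sqrt_pos.2 hm
  simp only [expand]
  gcongr

theorem sub_two_div_sub_one_mem_Ico {s : ℝ} (hs : 2 ≤ s) : (s - 2) / (s - 1) ∈ Ico 0 1 :=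
  ⟨div_nonneg (by linarith) (by linarith), (div_lt_one (by linarith)).2 (by linarith)⟩

theorem epsFBL_le_one (γ d n : ℝ) : epsFBL γ d n ≤ 1 :=
  gaussQ_le_one _

theorem antitoneOn_epsFBL {γ d : ℝ} (hγ : 0 < γ) (hd : 0 ≤ d) :
    AntitoneOn (epsFBL γ d) (Ioi 0) := by
  have capacity_nonneg : 0 ≤ Real.logb 2 (1 + γ) :=
    Real.logb_nonneg one_lt_two (le_add_of_nonneg_right hγ.le)
  intro m hm n hn hmn
  apply antitone_gaussQ
  rw [Real.sqrt_div (le_of_lt hm), Real.sqrt_div (le_of_lt hn), mul_assoc, mul_assoc,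
    div_mul_eq_mul_div, div_mul_eq_mul_div]
  gcongr ?_ * (?_ / _)
  exact monotoneOn_sqrt_mul_sub_div capacity_nonneg hd hm hn hmn

/-- The conditional expected distortion `κ(n_K)` of the Exclusion strategy given that the ciphertext
has been decoded: the factor of `1 − ε(n_M, d_M)` in `exclusionDistortion`. -/
noncomputable def decodedDistortion (γ dK Dconf α : ℝ) (S : ℤ) (nK : ℝ) : ℝ :=
  epsFBL γ dK nK * α * (((S : ℝ) - 2) / ((S : ℝ) - 1)) * Dconf + (1 - α) * Dconf

variable {γ dM dK Dloss Dconf α aM bM aK nM nK : ℝ} {S : ℤ}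

theorem exclusionDistortion_eq_add_mul :
    exclusionDistortion γ dM dK Dloss Dconf α S nM nK =
      decodedDistortion γ dK Dconf α S nK +
        epsFBL γ dM nM * (Dloss - decodedDistortion γ dK Dconf α S nK) := by
  unfold exclusionDistortion decodedDistortion
  ring

theorem decodedDistortion_eq_sub_mul :
    decodedDistortion γ dK Dconf α S nK =
      Dconf - α * (Dconf * (1 - epsFBL γ dK nK * (((S : ℝ) - 2) / ((S : ℝ) - 1)))) := by
  unfold decodedDistortion
  ring

theorem antitoneOn_decodedDistortion (hγ : 0 < γ) (hdK : 0 ≤ dK) (hS : 2 ≤ S)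
    (hDconf : 0 ≤ Dconf) (hα : 0 ≤ α) :
    AntitoneOn (decodedDistortion γ dK Dconf α S) (Ioi 0) := by
  have ratio_nonneg : 0 ≤ ((S : ℝ) - 2) / ((S : ℝ) - 1) :=
    (sub_two_div_sub_one_mem_Ico (by exact_mod_cast hS)).1
  intro m hm n hn hmn
  have eps_le : epsFBL γ dK n ≤ epsFBL γ dK m := antitoneOn_epsFBL hγ hdK hm hn hmn
  unfold decodedDistortion
  gcongr

theorem threshold_denominator_pos (hS : 2 ≤ S) (hDconf : 0 < Dconf) :
    0 < Dconf * (1 - epsFBL γ dK nK * (((S : ℝ) - 2) / ((S : ℝ) - 1))) := by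
  obtain ⟨ratio_nonneg, ratio_lt_one⟩ :=
    sub_two_div_sub_one_mem_Ico (s := S) (by exact_mod_cast hS)
  exact mul_pos hDconf <| sub_pos.2 <|
    (mul_le_of_le_one_left ratio_nonneg (epsFBL_le_one γ dK nK)).trans_lt ratio_lt_one

theorem le_decodedDistortion_iff (hS : 2 ≤ S) (hDconf : 0 < Dconf) :
    Dloss ≤ decodedDistortion γ dK Dconf α S nK ↔
      α ≤ (Dconf - Dloss) /
        (Dconf * (1 - epsFBL γ dK nK * (((S : ℝ) - 2) / ((S : ℝ) - 1)))) := by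
  rw [decodedDistortion_eq_sub_mul, le_div_iff₀ (threshold_denominator_pos hS hDconf), le_sub_comm]

theorem decodedDistortion_le_iff (hS : 2 ≤ S) (hDconf : 0 < Dconf) :
    decodedDistortion γ dK Dconf α S nK ≤ Dloss ↔
      (Dconf - Dloss) /
        (Dconf * (1 - epsFBL γ dK nK * (((S : ℝ) - 2) / ((S : ℝ) - 1)))) ≤ α := by
  rw [decodedDistortion_eq_sub_mul, div_le_iff₀ (threshold_denominator_pos hS hDconf), sub_le_comm]

theorem antitoneOn_exclusionDistortion_key (hγ : 0 < γ) (hdK : 0 ≤ dK) (hS : 2 ≤ S)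
    (hDconf : 0 ≤ Dconf) (hα : 0 ≤ α) :
    AntitoneOn (fun nK => exclusionDistortion γ dM dK Dloss Dconf α S nM nK) (Ioi 0) := by
  intro m hm n hn hmn
  have decoded_le := antitoneOn_decodedDistortion hγ hdK hS hDconf hα hm hn hmn
  exact add_le_add_right
    (mul_le_mul_of_nonneg_left decoded_le (sub_nonneg.2 (epsFBL_le_one γ dM nM))) _

theorem monotoneOn_exclusionDistortion_message (hγ : 0 < γ) (hdM : 0 ≤ dM)
    (hloss : Dloss ≤ decodedDistortion γ dK Dconf α S nK) :
    MonotoneOn (fun nM => exclusionDistortion γ dM dK Dloss Dconf α S nM nK) (Ioi 0) := by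
  intro m hm n hn hmn
  simp only [exclusionDistortion_eq_add_mul]
  exact add_le_add_right
    (mul_le_mul_of_nonpos_right (antitoneOn_epsFBL hγ hdM hm hn hmn) (sub_nonpos.2 hloss)) _

theorem antitoneOn_exclusionDistortion_message (hγ : 0 < γ) (hdM : 0 ≤ dM)
    (hloss : decodedDistortion γ dK Dconf α S nK ≤ Dloss) :
    AntitoneOn (fun nM => exclusionDistortion γ dM dK Dloss Dconf α S nM nK) (Ioi 0) := by
  intro m hm n hn hmn
  simp only [exclusionDistortion_eq_add_mul]
  exact add_le_add_right
    (mul_le_mul_of_nonneg_right (antitoneOn_epsFBL hγ hdM hm hn hmn) (sub_nonneg.2 hloss)) _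

theorem exclusion_distortion_max_general (hγ : 0 < γ) (hdM : 0 ≤ dM) (hdK : 0 ≤ dK) (hS : 2 ≤ S)
    (hDconf : 0 < Dconf) (hα : 0 ≤ α) (haM : 0 < aM) (haK : 0 < aK) :
    (α ≤ (Dconf - Dloss) /
        (Dconf * (1 - epsFBL γ dK aK * (((S : ℝ) - 2) / ((S : ℝ) - 1)))) →
      ∀ nM ∈ Ioc 0 bM, ∀ nK ∈ Ici aK,
        exclusionDistortion γ dM dK Dloss Dconf α S nM nK ≤
          exclusionDistortion γ dM dK Dloss Dconf α S bM aK) ∧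
    ((Dconf - Dloss) /
        (Dconf * (1 - epsFBL γ dK aK * (((S : ℝ) - 2) / ((S : ℝ) - 1)))) ≤ α →
      ∀ nM ∈ Ici aM, ∀ nK ∈ Ici aK,
        exclusionDistortion γ dM dK Dloss Dconf α S nM nK ≤
          exclusionDistortion γ dM dK Dloss Dconf α S aM aK) := by
  have shorten_key (nM : ℝ) {nK : ℝ} (hnK : aK ≤ nK) :
      exclusionDistortion γ dM dK Dloss Dconf α S nM nK ≤
        exclusionDistortion γ dM dK Dloss Dconf α S nM aK :=
    antitoneOn_exclusionDistortion_key hγ hdK hS hDconf.le hα haK (haK.trans_le hnK) hnK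
  rw [← le_decodedDistortion_iff hS hDconf, ← decodedDistortion_le_iff hS hDconf]
  constructor
  · intro hloss nM hnM nK hnK
    exact (shorten_key nM hnK).trans <| monotoneOn_exclusionDistortion_message hγ hdM hloss
      hnM.1 (hnM.1.trans_le hnM.2) hnM.2
  · intro hloss nM hnM nK hnK
    exact (shorten_key nM hnK).trans <| antitoneOn_exclusionDistortion_message hγ hdM hloss
      haM (haM.trans_le hnM) hnM

end

/-- Theorem 3: writing `ε_K^max = ε(a_K, d_K)`, if `D_conf > D_loss` and
`α < (D_conf − D_loss)/(D_conf·(1 − ε_K^max·(S−2)/(S−1)))`, the maximum of the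
Exclusion-strategy distortion over the box `[a_M, b_M] × [a_K, b_K]` is attained
at `(b_M, a_K) = (n_M^max, n_K^min)`; whereas if
`α ≥ (D_conf − D_loss)/(D_conf·(1 − ε_K^max·(S−2)/(S−1)))`, it is attained at
`(a_M, a_K) = (n_M^min, n_K^min)`. -/
theorem exclusion_distortion_max
    (γ dM dK Dloss Dconf α aM bM aK bK : ℝ) (S : ℤ)
    (hγ : 0 < γ) (hdM : 0 < dM) (hdK : 0 < dK) (hS : 3 ≤ S)
    (hDloss : 0 < Dloss) (hDconf : 0 < Dconf) (hα0 : 0 < α) (hα1 : α ≤ 1)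
    (haM : 0 < aM) (hMb : aM ≤ bM) (haK : 0 < aK) (hKb : aK ≤ bK) :
    ((Dloss < Dconf ∧
        α < (Dconf - Dloss) /
          (Dconf * (1 - epsFBL γ dK aK * (((S : ℝ) - 2) / ((S : ℝ) - 1)))) →
      ∀ nM ∈ Set.Icc aM bM, ∀ nK ∈ Set.Icc aK bK,
        exclusionDistortion γ dM dK Dloss Dconf α S nM nK ≤
          exclusionDistortion γ dM dK Dloss Dconf α S bM aK)) ∧
    ((Dconf - Dloss) /
        (Dconf * (1 - epsFBL γ dK aK * (((S : ℝ) - 2) / ((S : ℝ) - 1)))) ≤ α →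
      ∀ nM ∈ Set.Icc aM bM, ∀ nK ∈ Set.Icc aK bK,
        exclusionDistortion γ dM dK Dloss Dconf α S nM nK ≤
          exclusionDistortion γ dM dK Dloss Dconf α S aM aK) := by
  obtain ⟨below, above⟩ := exclusion_distortion_max_general (bM := bM) hγ hdM.le hdK.le
    (by lia : 2 ≤ S) hDconf hα0.le haM haK
  exact ⟨fun h nM hnM nK hnK => below h.2.le nM ⟨haM.trans_le hnM.1, hnM.2⟩ nK hnK.1,
    fun h nM hnM nK hnK => above h nM hnM.1 nK hnK.1⟩
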